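/- (Optimal randomized loss vector for the 0-1 minimax problem.) Let t ≥ 1, z ∈ ℝ^t, z̃ := (z,0) ∈ ℝ^{t+1} with descending order statistics z̃_{(1)} ≥ … ≥ z̃_{(t+1)}, k_max the largest k with Σ_{i=1}^k(z̃_{(i)} − z̃_{(k)}) < 1, and V := ( k_max − 1 + Σ_{i=1}^{k_max} z̃_{(i)} ) / k_max. Define L* ∈ ℝ^{t+1} by assigning, to the coordinate holding the j-th largest value z̃_{(j)}: L* = V − z̃_{(j)} if j ≤ k_max, and L* = 1 if j > k_max. Then L* is feasible, i.e., 0 ≤ L*_i ≤ 1 for all i and Σ_{i=1}^{t+1} L*_i = t, and it attains the minimum: max_{1≤i≤t+1} ( z̃_i + L*_i ) = V = min over all L ∈ ℝ^{t+1} with 0 ≤ L_i ≤ 1 and Σ_i L_i = t of max_{1≤i≤t+1} ( z̃_i + L_i ). -/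

import Mathlib

open Finset

/-- `z̃ = (z, 0) ∈ ℝ^{t+1}`: the vector `z ∈ ℝ^t` extended by a final zero coordinate. -/
noncomputable def ztil (t : ℕ) (z : Fin t → ℝ) : Fin (t + 1) → ℝ := Fin.snoc z 0

/-!
Read `1 - L i` as the probability of predicting the label `i`, so that feasibility of `L` says that
`1 - L` is a probability vector. For a set `s` of labels, `V = (#s - 1 + ∑ i ∈ s, x i) / #s` is the
level at which the weights `x i + 1 - V`, `i ∈ s`, sum to `1`; predicting with these weights makes
`x i + L i = V` on `s`.

Since `#s * (V - (c + 1)) = ∑ i ∈ s, (x i - c) - 1`, comparing `∑ i ∈ s, (x i - c)` with `1` decides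
on which side of `V` the number `c + 1` lies. If `s` consists of the `kmax` largest coordinates, the
inequality defining `kmax` therefore says that the weights are nonnegative, hence at most `1`, and
maximality says that the coordinates outside `s`, where `L = 1`, stay at or below `V`.

No feasible `L` does better than `V`: the weights `1 - L i` sum to at most `1` over `s`, so for some
`i ∈ s` we have `1 - L i ≤ x i + 1 - V`.
-/

section Equalizer

variable {ι 𝕜 : Type*} [Field 𝕜] {s : Finset ι} {x : ι → 𝕜}

/-- The level at which the weights `x i + 1 - equalizerValue s x`, `i ∈ s`, sum to `1`. For `s` the
`kmax` largest coordinates of `z̃` this is the `V` of the minimax problem. If `s` is empty, the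
division by `#s = 0` makes it `0`. -/
def equalizerValue (s : Finset ι) (x : ι → 𝕜) : 𝕜 :=
  (#s - 1 + ∑ i ∈ s, x i) / #s

open Classical in
/-- The loss vector that raises the coordinates in `s` to the common level `equalizerValue s x` and
never predicts a label outside `s`. -/
noncomputable def equalizerLoss (s : Finset ι) (x : ι → 𝕜) (i : ι) : 𝕜 :=
  if i ∈ s then equalizerValue s x - x i else 1

theorem equalizerLoss_of_mem {i : ι} (hi : i ∈ s) :
    equalizerLoss s x i = equalizerValue s x - x i :=
  if_pos hi

theorem equalizerLoss_of_notMem {i : ι} (hi : i ∉ s) : equalizerLoss s x i = 1 :=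
  if_neg hi

theorem card_mul_equalizerValue [CharZero 𝕜] (hs : s.Nonempty) :
    #s * equalizerValue s x = #s - 1 + ∑ i ∈ s, x i :=
  mul_div_cancel₀ _ (Nat.cast_ne_zero.2 hs.card_ne_zero)

theorem sum_add_one_sub_equalizerValue [CharZero 𝕜] (hs : s.Nonempty) :
    ∑ i ∈ s, (x i + 1 - equalizerValue s x) = 1 := by
  simp only [sum_sub_distrib, sum_add_distrib, sum_const, nsmul_eq_mul, mul_one,
    card_mul_equalizerValue hs]
  ring

theorem sum_equalizerLoss [CharZero 𝕜] [Fintype ι] (hs : s.Nonempty) :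
    ∑ i, equalizerLoss s x i = Fintype.card ι - 1 := by
  have sum_weights : ∑ i, (1 - equalizerLoss s x i) = 1 := by
    calc ∑ i, (1 - equalizerLoss s x i)
      _ = ∑ i ∈ s, (1 - equalizerLoss s x i) := by
        refine (sum_subset (subset_univ s) fun i _ hi => ?_).symm
        rw [equalizerLoss_of_notMem hi, sub_self]
      _ = ∑ i ∈ s, (x i + 1 - equalizerValue s x) := by
        refine sum_congr rfl fun i hi => ?_
        rw [equalizerLoss_of_mem hi]
        ring
      _ = 1 := sum_add_one_sub_equalizerValue hs
  rw [sum_sub_distrib, sum_const, card_univ, nsmul_eq_mul, mul_one] at sum_weights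
  linear_combination -sum_weights

theorem isGreatest_range_add_equalizerLoss [Preorder 𝕜] (hs : s.Nonempty)
    (h : ∀ i ∉ s, x i + 1 ≤ equalizerValue s x) :
    IsGreatest (Set.range fun i => x i + equalizerLoss s x i) (equalizerValue s x) := by
  have eq_on_s {i : ι} (hi : i ∈ s) : x i + equalizerLoss s x i = equalizerValue s x := by
    rw [equalizerLoss_of_mem hi, add_sub_cancel]
  refine ⟨hs.imp fun i hi => eq_on_s hi, Set.forall_mem_range.2 fun i => ?_⟩
  by_cases hi : i ∈ s
  · exact (eq_on_s hi).le
  · simpa only [equalizerLoss_of_notMem hi] using h i hi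

variable [LinearOrder 𝕜] [IsStrictOrderedRing 𝕜]

theorem equalizerValue_lt_add_one_iff (hs : s.Nonempty) {c : 𝕜} :
    equalizerValue s x < c + 1 ↔ ∑ i ∈ s, (x i - c) < 1 := by
  have card_pos : (0 : 𝕜) < #s := Nat.cast_pos.2 hs.card_pos
  rw [equalizerValue, div_lt_iff₀ card_pos, sum_sub_distrib, sum_const, nsmul_eq_mul]
  constructor <;> intro h <;> linarith

theorem le_equalizerValue (h : ∀ i ∈ s, equalizerValue s x ≤ x i + 1) {j : ι} (hj : j ∈ s) :
    x j ≤ equalizerValue s x := by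
  have weight_le_sum : x j + 1 - equalizerValue s x ≤ ∑ i ∈ s, (x i + 1 - equalizerValue s x) :=
    single_le_sum (f := fun i => x i + 1 - equalizerValue s x)
      (fun i hi => sub_nonneg.2 (h i hi)) hj
  rw [sum_add_one_sub_equalizerValue ⟨j, hj⟩] at weight_le_sum
  linarith

theorem equalizerLoss_mem_Icc (h : ∀ i ∈ s, equalizerValue s x ≤ x i + 1) (i : ι) :
    equalizerLoss s x i ∈ Set.Icc 0 1 := by
  by_cases hi : i ∈ s
  · rw [equalizerLoss_of_mem hi]
    exact ⟨sub_nonneg.2 (le_equalizerValue h hi), sub_le_iff_le_add'.2 (h i hi)⟩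
  · rw [equalizerLoss_of_notMem hi]
    exact Set.right_mem_Icc.2 zero_le_one

theorem exists_equalizerValue_le_add [Fintype ι] (hs : s.Nonempty) {L : ι → 𝕜}
    (hL : ∀ i, L i ≤ 1) (hsum : Fintype.card ι - 1 ≤ ∑ i, L i) :
    ∃ i ∈ s, equalizerValue s x ≤ x i + L i := by
  have sum_weights_le : ∑ i ∈ s, (1 - L i) ≤ ∑ i ∈ s, (x i + 1 - equalizerValue s x) :=
    calc ∑ i ∈ s, (1 - L i)
      _ ≤ ∑ i, (1 - L i) :=
        sum_le_univ_sum_of_nonneg fun i => sub_nonneg.2 (hL i)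
      _ = Fintype.card ι - ∑ i, L i := by simp
      _ ≤ 1 := by linarith
      _ = ∑ i ∈ s, (x i + 1 - equalizerValue s x) := (sum_add_one_sub_equalizerValue hs).symm
  obtain ⟨i, hi, weight_le⟩ := exists_le_of_sum_le hs sum_weights_le
  exact ⟨i, hi, by linarith⟩

end Equalizer

section FirstLabels

variable {ι : Type*} [Fintype ι] {n k : ℕ} {σ : Fin n ≃ ι}

/-- The first `k` labels in the enumeration `σ`; these are the `k` largest coordinates of `x` when
`x ∘ σ` is antitone. -/
def firstLabels (σ : Fin n ≃ ι) (k : ℕ) : Finset ι :=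
  {i | (σ.symm i : ℕ) < k}

@[simp]
theorem mem_firstLabels {i : ι} : i ∈ firstLabels σ k ↔ (σ.symm i : ℕ) < k := by
  simp [firstLabels]

theorem sum_firstLabels {M : Type*} [AddCommMonoid M] (f : ι → M) :
    ∑ i ∈ firstLabels σ k, f i = ∑ j : Fin n, if (j : ℕ) < k then f (σ j) else 0 := by
  rw [firstLabels, sum_filter, ← Equiv.sum_comp σ]
  simp only [Equiv.symm_apply_apply]

theorem card_firstLabels (hk : k ≤ n) : #(firstLabels σ k) = k := by
  rw [card_eq_sum_ones, sum_firstLabels, ← sum_filter, ← card_eq_sum_ones,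
    Fin.card_filter_val_lt, min_eq_right hk]

theorem firstLabels_nonempty (hk0 : 1 ≤ k) (hk : k ≤ n) : (firstLabels σ k).Nonempty :=
  card_pos.1 (by rwa [card_firstLabels hk])

theorem firstLabels_succ (hk : k < n) :
    firstLabels σ (k + 1) = cons (σ ⟨k, hk⟩) (firstLabels σ k) (by simp) := by
  ext i
  rw [mem_cons, mem_firstLabels, mem_firstLabels, Nat.lt_succ_iff_lt_or_eq, or_comm,
    ← σ.symm_apply_eq, Fin.ext_iff]

theorem sum_firstLabels_sub {R : Type*} [Ring R] (hk : k ≤ n) (x : ι → R) (c : R) :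
    ∑ i ∈ firstLabels σ k, (x i - c)
      = (∑ j : Fin n, if (j : ℕ) < k then x (σ j) else 0) - k * c := by
  rw [sum_sub_distrib, sum_const, card_firstLabels hk, nsmul_eq_mul, sum_firstLabels]

variable {𝕜 : Type*} [Field 𝕜] [LinearOrder 𝕜] [IsStrictOrderedRing 𝕜] {x : ι → 𝕜}

theorem equalizerValue_le_add_one_of_mem_firstLabels (hx : Antitone fun j => x (σ j))
    (hk : k - 1 < n) (h : ∑ i ∈ firstLabels σ k, (x i - x (σ ⟨k - 1, hk⟩)) < 1)
    {i : ι} (hi : i ∈ firstLabels σ k) :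
    equalizerValue (firstLabels σ k) x ≤ x i + 1 := by
  have last_le : x (σ ⟨k - 1, hk⟩) ≤ x i := by
    have symm_le : σ.symm i ≤ ⟨k - 1, hk⟩ := Nat.le_sub_one_of_lt (mem_firstLabels.1 hi)
    simpa only [Equiv.apply_symm_apply] using hx symm_le
  have value_lt := (equalizerValue_lt_add_one_iff ⟨i, hi⟩).2 h
  linarith

theorem add_one_le_equalizerValue_of_notMem_firstLabels (hx : Antitone fun j => x (σ j))
    (hk0 : 1 ≤ k)
    (h : ∀ hk : k < n, 1 ≤ ∑ i ∈ firstLabels σ (k + 1), (x i - x (σ ⟨k, hk⟩)))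
    {i : ι} (hi : i ∉ firstLabels σ k) :
    x i + 1 ≤ equalizerValue (firstLabels σ k) x := by
  have le_symm : k ≤ σ.symm i := not_lt.1 (mem_firstLabels.not.1 hi)
  have hk : k < n := le_symm.trans_lt (σ.symm i).isLt
  have le_next : x i ≤ x (σ ⟨k, hk⟩) := by
    simpa only [Equiv.apply_symm_apply] using hx (Fin.mk_le_of_le_val le_symm)
  have one_le_sum := h hk
  rw [firstLabels_succ hk, sum_cons, sub_self, zero_add, ← not_lt,
    ← equalizerValue_lt_add_one_iff (firstLabels_nonempty hk0 hk.le), not_lt] at one_le_sum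
  linarith

end FirstLabels

theorem zeroOne_optimal_loss_vector_general {ι : Type*} [Fintype ι] (t : ℕ) (x : ι → ℝ)
    (σ : Fin (t + 1) ≃ ι) (hσ : Antitone fun j => x (σ j))
    (kmax : ℕ) (hk1 : 1 ≤ kmax) (hk2 : kmax ≤ t + 1)
    (hkc : (∑ j : Fin (t + 1), if (j : ℕ) < kmax then x (σ j) else 0)
        - kmax * x (σ ⟨kmax - 1, Nat.sub_one_lt_of_le hk1 hk2⟩) < 1)
    (hkl : ∀ k : ℕ, ∀ hk0 : 1 ≤ k, ∀ hk : k ≤ t + 1,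
      ((∑ j : Fin (t + 1), if (j : ℕ) < k then x (σ j) else 0)
        - k * x (σ ⟨k - 1, Nat.sub_one_lt_of_le hk0 hk⟩) < 1) → k ≤ kmax)
    (V : ℝ)
    (hV : V = ((kmax : ℝ) - 1
        + ∑ j : Fin (t + 1), if (j : ℕ) < kmax then x (σ j) else 0) / kmax)
    (Lstar : ι → ℝ)
    (hLstar : ∀ i, Lstar i = if (σ.symm i : ℕ) < kmax then V - x i else 1) :
    (∀ i, 0 ≤ Lstar i ∧ Lstar i ≤ 1) ∧ (∑ i, Lstar i = t) ∧
    (⨆ i, (x i + Lstar i)) = V ∧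
    (∀ Lv : ι → ℝ, (∀ i, 0 ≤ Lv i ∧ Lv i ≤ 1) → (∑ i, Lv i = t) →
      V ≤ ⨆ i, (x i + Lv i)) := by
  set s := firstLabels σ kmax with hs
  have s_nonempty : s.Nonempty := firstLabels_nonempty hk1 hk2
  obtain rfl : V = equalizerValue s x := by
    rw [hV, equalizerValue, card_firstLabels hk2, sum_firstLabels]
  obtain rfl : Lstar = equalizerLoss s x :=
    funext fun i => by simp only [hLstar, equalizerLoss, hs, mem_firstLabels]
  have card_sub_one : (Fintype.card ι : ℝ) - 1 = t := by simp [← Fintype.card_congr σ]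
  have value_le : ∀ i ∈ s, equalizerValue s x ≤ x i + 1 := fun i =>
    equalizerValue_le_add_one_of_mem_firstLabels hσ (Nat.sub_one_lt_of_le hk1 hk2)
      (by rwa [sum_firstLabels_sub hk2])
  have le_value : ∀ i ∉ s, x i + 1 ≤ equalizerValue s x := fun i =>
    add_one_le_equalizerValue_of_notMem_firstLabels hσ hk1 fun hk => by
      rw [sum_firstLabels_sub hk]
      exact not_lt.1 fun hlt => (hkl (kmax + 1) le_add_self hk hlt).not_gt kmax.lt_succ_self
  refine ⟨equalizerLoss_mem_Icc value_le, (sum_equalizerLoss s_nonempty).trans card_sub_one,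
    (isGreatest_range_add_equalizerLoss s_nonempty le_value).csSup_eq, fun Lv hLv hsum => ?_⟩
  obtain ⟨i, -, hi⟩ := exists_equalizerValue_le_add (x := x) s_nonempty (fun i => (hLv i).2)
    (card_sub_one.trans hsum.symm).le
  exact le_ciSup_of_le (Set.finite_range _).bddAbove i hi

/-- **Optimal randomized loss vector for the 0-1 minimax problem.**
Let `z ∈ ℝ^t`, `z̃ = (z,0) ∈ ℝ^{t+1}` with descending order statistics given by a sorting
permutation `σ` (`z̃_{(j+1)} = ztil t z (σ j)`, 0-indexed), `kmax` the largest `k` with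
`∑_{i=1}^k (z̃_{(i)} − z̃_{(k)}) < 1`, and `V = (kmax − 1 + ∑_{i=1}^{kmax} z̃_{(i)})/kmax`.
Define `L*` by `L*_i = V − z̃_i` if the coordinate `i` is among the `kmax` largest
(i.e. `σ⁻¹(i) < kmax`), and `L*_i = 1` otherwise. Then `L*` is feasible
(`0 ≤ L*_i ≤ 1`, `∑ L*_i = t`) and attains the minimum:
`max_i (z̃_i + L*_i) = V = min { max_i (z̃_i + L_i) : 0 ≤ L_i ≤ 1, ∑ L_i = t }`. -/
theorem zeroOne_optimal_loss_vector (t : ℕ) (ht : 1 ≤ t) (z : Fin t → ℝ)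
    (σ : Equiv.Perm (Fin (t + 1)))
    (hσ : Antitone fun j => ztil t z (σ j))
    (kmax : ℕ) (hk1 : 1 ≤ kmax) (hk2 : kmax ≤ t + 1)
    (hkc : (∑ j : Fin (t + 1), if (j : ℕ) < kmax then ztil t z (σ j) else 0)
        - kmax * ztil t z (σ ⟨kmax - 1, by omega⟩) < 1)
    (hkl : ∀ k : ℕ, 1 ≤ k → ∀ hk : k ≤ t + 1,
      ((∑ j : Fin (t + 1), if (j : ℕ) < k then ztil t z (σ j) else 0)
        - k * ztil t z (σ ⟨k - 1, by omega⟩) < 1) → k ≤ kmax)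
    (V : ℝ)
    (hV : V = ((kmax : ℝ) - 1
        + ∑ j : Fin (t + 1), if (j : ℕ) < kmax then ztil t z (σ j) else 0) / kmax)
    (Lstar : Fin (t + 1) → ℝ)
    (hLstar : ∀ i : Fin (t + 1),
      Lstar i = if ((σ.symm i : Fin (t + 1)) : ℕ) < kmax then V - ztil t z i else 1) :
    (∀ i, 0 ≤ Lstar i ∧ Lstar i ≤ 1) ∧ (∑ i, Lstar i = t) ∧
    (⨆ i, (ztil t z i + Lstar i)) = V ∧
    (∀ Lv : Fin (t + 1) → ℝ, (∀ i, 0 ≤ Lv i ∧ Lv i ≤ 1) → (∑ i, Lv i = t) →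
      V ≤ ⨆ i, (ztil t z i + Lv i)) :=
  zeroOne_optimal_loss_vector_general t (ztil t z) σ hσ kmax hk1 hk2 hkc hkl V hV Lstar hLstar
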